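/- arXiv:1712.00388 — 6 statements merged into one kernel-verified Lean document; each statement's English description precedes it below -/
import Mathlib

section
/- Let n ≥ 1 and let S = (s_{ij}) be a real n×n upper triangular matrix with s_{ii} = 1 and s_{ij} = 0 for i > j. For each j ∈ {1,…,n} define n×n matrices A_j and B_j as follows: A_j agrees with the identity matrix outside row j, and row j of A_j has entries s_{1j},…,s_{j−1,j} in columns 1,…,j−1, entry 1 in column j, and entries −s_{j,j+1},…,−s_{j,n} in columns j+1,…,n; B_j agrees with the identity outside row j, and row j of B_j has entries −s_{1j},…,−s_{j−1,j} in columns 1,…,j−1, entry −1 in column j, and entries −s_{j,j+1},…,−s_{j,n} in columns j+1,…,n. Then S⁻¹Sᵀ = A_1·A_2·⋯·A_n and −S⁻¹Sᵀ = B_1·B_2·⋯·B_n. -/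
open Matrix

theorem aux_prod (n : ℕ) (e : ℝ) (S : Matrix (Fin n) (Fin n) ℝ)
    (hdiag : ∀ i, S i i = 1) (hlow : ∀ i j : Fin n, j < i → S i j = 0)
    (C : Fin n → Matrix (Fin n) (Fin n) ℝ)
    (hC : ∀ j i l, C j i l =
      if i = j then (if l < j then e * S l j else if l = j then e else - S j l)
      else (if i = l then 1 else 0)) :
    S * (List.ofFn C).prod = e • Sᵀ := by
  have key : ∀ d k : ℕ, k + d = n → ∀ i l : Fin n,
      ((i : ℕ) < k → ((List.ofFn C).drop k).prod i l = if i = l then 1 else 0) ∧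
      (k ≤ (i : ℕ) → ∑ m, S i m * ((List.ofFn C).drop k).prod m l = e * S l i) := by
    intro d
    induction d with
    | zero =>
      intro k hk i l
      refine ⟨fun _ => ?_, fun h => ?_⟩
      · rw [List.drop_eq_nil_of_le (by simp; omega)]
        simp [Matrix.one_apply]
      · have := i.2
        omega
    | succ d ih =>
      intro k hk
      have hkn : k < n := by omega
      have ih' := ih (k + 1) (by omega)
      rw [List.drop_eq_getElem_cons (by simpa using hkn), List.prod_cons]
      generalize ((List.ofFn C).drop (k + 1)).prod = P at ih'
      simp only [List.getElem_ofFn]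
      obtain ⟨K, hK⟩ : ∃ K : Fin n, K = ⟨k, hkn⟩ := ⟨_, rfl⟩
      have hKv : (K : ℕ) = k := by rw [hK]
      rw [← hK]
      have hne : ∀ i l, i ≠ K → (C K * P) i l = P i l := by
        intro i l hi
        simp [Matrix.mul_apply, hC, hi]
      intro i l
      refine ⟨fun h => ?_, fun h => ?_⟩
      · rw [hne i l (by rintro rfl; omega)]
        exact (ih' i l).1 (by omega)
      · by_cases hi : i = K
        · subst hi
          have h1 : ∑ m, S i m * (C i * P) m l
              = (C i * P) i l + ∑ m, (if m = i then 0 else S i m) * P m l := by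
            rw [← Finset.add_sum_erase _ _ (Finset.mem_univ i),
              ← Finset.add_sum_erase (f := fun m => (if m = i then 0 else S i m) * P m l)
                _ (Finset.mem_univ i)]
            simp only [hdiag, one_mul, if_true, zero_mul, zero_add]
            congr 1
            refine Finset.sum_congr rfl fun m hm => ?_
            have hm' := Finset.ne_of_mem_erase hm
            rw [hne m l hm', if_neg hm']
          rw [h1, Matrix.mul_apply, ← Finset.sum_add_distrib]
          have h2 : ∀ m, C i i m * P m l + (if m = i then 0 else S i m) * P m l
              = e * S m i * (if m = l then 1 else 0) := by
            intro m
            rw [hC, if_pos rfl]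
            rcases lt_trichotomy m i with hm | hm | hm
            · have hv : (m : ℕ) < i := hm
              rw [if_pos hm, if_neg hm.ne, hlow i m hm, (ih' m l).1 (by omega)]
              ring
            · subst hm
              rw [(ih' m l).1 (by omega)]
              simp [hdiag]
            · rw [if_neg hm.not_gt, if_neg hm.ne', if_neg hm.ne', hlow m i hm]
              ring
          rw [Finset.sum_congr rfl fun m _ => h2 m]
          simp
        · have hik : k + 1 ≤ (i : ℕ) := by
            have : (i : ℕ) ≠ K := fun h => hi (Fin.ext h)
            omega
          rw [← (ih' i l).2 hik]
          refine Finset.sum_congr rfl fun m _ => ?_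
          by_cases hm : m = K
          · rw [hlow i m (by rw [hm, Fin.lt_def]; omega)]
            simp
          · rw [hne m l hm]
  ext i l
  have := (key n 0 (by omega) i l).2 (Nat.zero_le _)
  simpa [Matrix.mul_apply] using this

/-- Picard–Lefschetz factorization of `S⁻¹ Sᵀ`: for an upper triangular `S` with
`1`'s on the diagonal, `S⁻¹ Sᵀ` is the product of the pseudo-reflection matrices
`A_1 ⋯ A_n` and `-S⁻¹ Sᵀ` is the product of the reflection matrices `B_1 ⋯ B_n`. -/
theorem stmt2 (n : ℕ) (hn : 1 ≤ n) (S : Matrix (Fin n) (Fin n) ℝ)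
    (hdiag : ∀ i, S i i = 1) (hlow : ∀ i j : Fin n, j < i → S i j = 0)
    (A B : Fin n → Matrix (Fin n) (Fin n) ℝ)
    (hA : ∀ j i l, A j i l =
      if i = j then (if l < j then S l j else if l = j then 1 else - S j l)
      else (if i = l then 1 else 0))
    (hB : ∀ j i l, B j i l =
      if i = j then (if l < j then - S l j else if l = j then -1 else - S j l)
      else (if i = l then 1 else 0)) :
    S⁻¹ * Sᵀ = (List.ofFn A).prod ∧ - (S⁻¹ * Sᵀ) = (List.ofFn B).prod := by
  have hdet : IsUnit S.det := by
    rw [Matrix.det_of_upperTriangular (fun i j h => hlow i j h)]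
    simp [hdiag]
  have h1 := aux_prod n 1 S hdiag hlow A (by simpa using hA)
  have h2 := aux_prod n (-1) S hdiag hlow B (by simpa using hB)
  constructor
  · rw [← Matrix.nonsing_inv_mul_cancel_left S (List.ofFn A).prod hdet, h1, one_smul]
  · rw [← Matrix.nonsing_inv_mul_cancel_left S (List.ofFn B).prod hdet, h2]
    simp
end

section
/- Let n ≥ 1 and let S = (s_{ij}) be a real n×n upper triangular matrix with s_{ii} = 1 and s_{ij} = 0 for i > j. Let C be the n×n cyclic permutation matrix with C_{1,n} = 1, C_{i,i−1} = 1 for 2 ≤ i ≤ n, and all other entries 0 (so Cⁿ = Id). For k ∈ {1,2} set σ_k := (−1)^k, and let A^{(2)}_j, A^{(1)}_j be the pseudo-reflection resp. reflection matrices associated to S (A^{(2)}_j = identity outside row j with row j equal to (s_{1j},…,s_{j−1,j}, 1, −s_{j,j+1},…,−s_{j,n}); A^{(1)}_j = identity outside row j with row j equal to (−s_{1j},…,−s_{j−1,j}, −1, −s_{j,j+1},…,−s_{j,n})). For j ∈ {1,…,n} define the n×n matrix R^{(k)}_j whose first row is (−s_{j,j+1}, …, −s_{j,n}, σ_k·s_{1j},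 …, σ_k·s_{j−1,j}, σ_k) (columns 1,…,n−j carry −s_{j,j+1},…,−s_{j,n}, columns n−j+1,…,n−1 carry σ_k·s_{1j},…,σ_k·s_{j−1,j}, column n carries σ_k), whose entries satisfy (R^{(k)}_j)_{i+1,i} = 1 for 1 ≤ i ≤ n−1, and all other entries 0. Then R^{(k)}_j = C^{−(j−1)}·A^{(k)}_j·C^{j} for all j and k, and (−1)^k·S⁻¹Sᵀ = R^{(k)}_1·R^{(k)}_2·⋯·R^{(k)}_n. -/
open Matrix

theorem aux_mod (n x : ℕ) (h : x < 2 * n) : x % n = if x < n then x else x - n := by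
  split_ifs with h1
  · exact Nat.mod_eq_of_lt h1
  · rw [Nat.mod_eq_sub_mod (by omega), Nat.mod_eq_of_lt (by omega)]

theorem aux_pow (n : ℕ) (hn : 1 ≤ n) (C : Matrix (Fin n) (Fin n) ℝ)
    (hC : ∀ i l : Fin n, C i l = if (i : ℕ) = ((l : ℕ) + 1) % n then 1 else 0) (m : ℕ) :
    ∀ i l : Fin n, (C ^ m) i l = if (i : ℕ) = ((l : ℕ) + m) % n then 1 else 0 := by
  induction m with
  | zero =>
    intro i l
    rw [pow_zero, Matrix.one_apply, Nat.add_zero, Nat.mod_eq_of_lt l.2]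
    simp [Fin.ext_iff]
  | succ m ih =>
    intro i l
    rw [pow_succ, Matrix.mul_apply,
      Finset.sum_eq_single (⟨((l : ℕ) + 1) % n, Nat.mod_lt _ (by omega)⟩ : Fin n)]
    · rw [ih, hC]
      simp only [Nat.mod_add_mod, if_true, mul_one]
      rw [Nat.add_right_comm, Nat.add_assoc]
    · intro b _ hb
      rw [hC, if_neg, mul_zero]
      intro h
      exact hb (Fin.ext h)
    · simp

theorem aux_step (n : ℕ) (S : Matrix (Fin n) (Fin n) ℝ)
    (hdiag : ∀ i, S i i = 1) (hlow : ∀ i j : Fin n, j < i → S i j = 0)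
    (s : ℝ) (A Q : Matrix (Fin n) (Fin n) ℝ) (j : Fin n)
    (hA : ∀ i l, A i l =
      if i = j then
        (if l < j then s * S l j else if l = j then s else - S j l)
      else (if i = l then 1 else 0))
    (h1 : ∀ i l, i ≤ j → Q i l = if i = l then 1 else 0)
    (h2 : ∀ i l, j < i → (S * Q) i l = s * S l i) :
    (∀ i l, i < j → (A * Q) i l = if i = l then 1 else 0) ∧
    (∀ i l, j ≤ i → (S * (A * Q)) i l = s * S l i) := by
  have hne : ∀ i l, i ≠ j → (A * Q) i l = Q i l := by
    intro i l hi
    rw [Matrix.mul_apply]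
    simp [hA, hi]
  refine ⟨fun i l hi => ?_, fun i l hi => ?_⟩
  · rw [hne i l hi.ne, h1 i l hi.le]
  · rcases hi.lt_or_eq with hi | rfl
    · rw [← h2 i l hi, Matrix.mul_apply, Matrix.mul_apply]
      refine Finset.sum_congr rfl fun p _ => ?_
      by_cases hp : p = j
      · subst hp
        rw [hlow i p hi]; simp
      · rw [hne p l hp]
    · rw [Matrix.mul_apply, ← Finset.add_sum_erase _ _ (Finset.mem_univ j), hdiag, one_mul,
        Matrix.mul_apply, ← Finset.add_sum_erase _ _ (Finset.mem_univ j), add_assoc,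
        ← Finset.sum_add_distrib]
      have : ∀ p ∈ Finset.univ.erase j, A j p * Q p l + S j p * (A * Q) p l
          = if p = l then s * S l j else 0 := by
        intro p hp
        have hp : p ≠ j := Finset.ne_of_mem_erase hp
        rw [hne p l hp, hA, if_pos rfl]
        rcases lt_or_gt_of_ne hp with h | h
        · rw [if_pos h, hlow j p h, h1 p l h.le]
          split_ifs with h'
          · subst h'; ring
          · ring
        · rw [if_neg h.not_gt, if_neg hp]
          split_ifs with h'
          · subst h'; rw [hlow p j h]; ring
          · ring
      rw [Finset.sum_congr rfl this, Finset.sum_ite_eq' , hA, h1 j l le_rfl]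
      by_cases h : j = l
      · subst h; simp [hdiag]
      · simp [h, Ne.symm h]

/-- Cyclic conjugates of the (pseudo-)reflection matrices: with `C` the cyclic
permutation matrix (`Cⁿ = 1`), the companion-like matrices
`R^{(k)}_j = C^{-(j-1)} A^{(k)}_j C^j` satisfy
`(-1)^k ⬝ S⁻¹ Sᵀ = R^{(k)}_1 ⋯ R^{(k)}_n`. Indices are 0-based: `j : Fin n`
corresponds to the 1-based index `j+1`. -/
theorem stmt3 (n : ℕ) (hn : 1 ≤ n) (S : Matrix (Fin n) (Fin n) ℝ)
    (hdiag : ∀ i, S i i = 1) (hlow : ∀ i j : Fin n, j < i → S i j = 0)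
    (k : ℕ) (hk : k = 1 ∨ k = 2)
    (C : Matrix (Fin n) (Fin n) ℝ)
    (hC : ∀ i l : Fin n, C i l = if (i : ℕ) = ((l : ℕ) + 1) % n then 1 else 0)
    (A R : Fin n → Matrix (Fin n) (Fin n) ℝ)
    (hA : ∀ j i l, A j i l =
      if i = j then
        (if l < j then (-1:ℝ)^k * S l j else if l = j then (-1:ℝ)^k else - S j l)
      else (if i = l then 1 else 0))
    (hR : ∀ j i l, R j i l =
      if (i : ℕ) = 0 then
        (if (l : ℕ) < n - 1 - (j : ℕ) then
            - S j ⟨((j:ℕ) + (l:ℕ) + 1) % n, Nat.mod_lt _ (by omega)⟩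
         else if (l : ℕ) < n - 1 then
            (-1:ℝ)^k * S ⟨((j:ℕ) + (l:ℕ) + 1) % n, Nat.mod_lt _ (by omega)⟩ j
         else (-1:ℝ)^k)
      else (if (i : ℕ) = (l : ℕ) + 1 then 1 else 0)) :
    C ^ n = 1 ∧
    (∀ j : Fin n, R j = (C ^ (j : ℕ))⁻¹ * A j * C ^ ((j : ℕ) + 1)) ∧
    ((-1:ℝ)^k • (S⁻¹ * Sᵀ) = (List.ofFn R).prod) := by
  have hpow := aux_pow n hn C hC
  have hCn : C ^ n = 1 := by
    ext i l
    rw [hpow, Nat.add_mod_right, Nat.mod_eq_of_lt l.2, Matrix.one_apply]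
    simp [Fin.ext_iff]
  have hdet : ∀ m, IsUnit (C ^ m).det := by
    intro m
    have : IsUnit C.det := by
      have h : C.det ^ n = 1 := by rw [← Matrix.det_pow, hCn, Matrix.det_one]
      exact IsUnit.of_pow_eq_one h (by omega)
    rw [Matrix.det_pow]
    exact this.pow m
  have hCR : ∀ j : Fin n, C ^ (j : ℕ) * R j = A j * C ^ ((j : ℕ) + 1) := by
    intro j
    ext i l
    have hj := j.2
    have hi := i.2
    have hl := l.2
    rw [Matrix.mul_apply, Matrix.mul_apply,
      Finset.sum_eq_single
        (⟨((i : ℕ) + (n - j)) % n, Nat.mod_lt _ (by omega)⟩ : Fin n),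
      Finset.sum_eq_single
        (⟨((j : ℕ) + (l : ℕ) + 1) % n, Nat.mod_lt _ (by omega)⟩ : Fin n)]
    · rw [hpow, if_pos, hpow, if_pos, one_mul, mul_one, hR, hA]
      · have e1 := aux_mod n ((i : ℕ) + (n - j)) (by omega)
        have e2 := aux_mod n ((j : ℕ) + (l : ℕ) + 1) (by omega)
        simp only [Fin.ext_iff, Fin.lt_def, e1]
        by_cases hij : (i : ℕ) = j
        · rw [if_pos (by split_ifs <;> omega), if_pos hij]
          by_cases c1 : (l : ℕ) < n - 1 - j
          · rw [if_pos c1, if_neg, if_neg]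
            · rw [e2]; split_ifs <;> omega
            · rw [e2]; split_ifs <;> omega
          · rw [if_neg c1]
            by_cases c2 : (l : ℕ) < n - 1
            · rw [if_pos c2, if_pos]
              rw [e2]; split_ifs <;> omega
            · rw [if_neg c2, if_neg, if_pos]
              · rw [e2]; split_ifs <;> omega
              · rw [e2]; split_ifs <;> omega
        · rw [if_neg (by split_ifs <;> omega), if_neg hij]
          congr 1
          rw [e2]
          apply propext
          split_ifs <;> omega
      · simp only
        congr 1; omega
      · simp only [Nat.mod_add_mod]
        rw [show (i : ℕ) + (n - j) + j = i + n by omega, Nat.add_mod_right,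
          Nat.mod_eq_of_lt hi]
    · intro b _ hb
      rw [hpow, if_neg, mul_zero]
      intro h
      apply hb
      apply Fin.ext
      simp only
      rw [h]
      congr 1; omega
    · simp
    · intro b _ hb
      rw [hpow, if_neg, zero_mul]
      intro h
      apply hb
      apply Fin.ext
      simp only
      have hb' := b.2
      rw [h, Nat.mod_add_mod, show (b : ℕ) + j + (n - j) = b + n by omega, Nat.add_mod_right,
          Nat.mod_eq_of_lt hb']
    · simp
  have hRj : ∀ j : Fin n, R j = (C ^ (j : ℕ))⁻¹ * A j * C ^ ((j : ℕ) + 1) := by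
    intro j
    rw [Matrix.mul_assoc, ← hCR, ← Matrix.mul_assoc, Matrix.nonsing_inv_mul _ (hdet _),
      Matrix.one_mul]
  refine ⟨hCn, hRj, ?_⟩
  have key : ∀ d m : ℕ, m + d = n → ∃ Q : Matrix (Fin n) (Fin n) ℝ,
      C ^ m * ((List.ofFn R).drop m).prod = Q ∧
      (∀ i l : Fin n, (i : ℕ) < m → Q i l = if i = l then 1 else 0) ∧
      (∀ i l : Fin n, m ≤ (i : ℕ) → (S * Q) i l = (-1 : ℝ) ^ k * S l i) := by
    intro d
    induction d with
    | zero =>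
      intro m hm
      have hm : m = n := by omega
      subst hm
      refine ⟨1, ?_, ?_, ?_⟩
      · rw [List.drop_of_length_le (by simp), hCn]; simp
      · intro i l _
        rw [Matrix.one_apply]
      · intro i l h
        exact absurd i.2 (by omega)
    | succ d ih =>
      intro m hm
      obtain ⟨Q, hQ, h1, h2⟩ := ih (m + 1) (by omega)
      have hmn : m < n := by omega
      obtain ⟨a, b⟩ := aux_step n S hdiag hlow ((-1 : ℝ) ^ k) (A ⟨m, hmn⟩) Q ⟨m, hmn⟩
        (hA ⟨m, hmn⟩) (fun i l hi => h1 i l (Nat.lt_succ_of_le hi)) (fun i l hi => h2 i l hi)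
      refine ⟨A ⟨m, hmn⟩ * Q, ?_, a, b⟩
      rw [List.drop_eq_getElem_cons (by simpa using hmn), List.prod_cons, List.getElem_ofFn,
        ← Matrix.mul_assoc, hCR ⟨m, hmn⟩, Matrix.mul_assoc, hQ]
  obtain ⟨Q, hQ, -, h2⟩ := key n 0 (by omega)
  rw [pow_zero, Matrix.one_mul, List.drop_zero] at hQ
  rw [hQ]
  have hSQ : S * Q = (-1 : ℝ) ^ k • Sᵀ := by
    ext i l
    rw [h2 i l (Nat.zero_le _)]
    simp
  have hS : IsUnit S.det := by
    rw [Matrix.det_of_upperTriangular (fun i j h => hlow i j h)]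
    simp [hdiag]
  rw [← Matrix.mul_smul, ← hSQ, ← Matrix.mul_assoc, Matrix.nonsing_inv_mul _ hS, Matrix.one_mul]
end

section
/- Let n ≥ 1, k ∈ {1,2}, and let p(x) = xⁿ + p_{n−1}x^{n−1} + ⋯ + p_1x + p_0 ∈ ℝ[x] be monic with coefficients satisfying p_{n−j} = (−1)^{k−1}·p_j for all 0 ≤ j ≤ n (in particular p_0 = (−1)^{k−1}, where p_n := 1). Let S be the upper triangular n×n matrix with S_{ii} = 1, S_{ij} = p_{n−(j−i)} for i < j and S_{ij} = 0 for i > j, and let R be the companion matrix of p (first row (−p_{n−1},…,−p_0), R_{i+1,i} = 1 for 1 ≤ i ≤ n−1, other entries 0). Then (−1)^k·S⁻¹Sᵀ = Rⁿ. -/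
open Matrix

/-- Entry `(i, l)` of `S * R ^ m`. -/
noncomputable def rowF (n : ℕ) (c : ℕ → ℝ) (m i l : ℕ) : ℝ :=
  if m ≤ i then (if i ≤ l + m ∧ l + m < n then c (n + i - (l + m)) else 0)
  else (if n ≤ l + m ∧ l + m ≤ n + i then - c (n + i - (l + m)) else 0)

lemma rowF_step (n : ℕ) (c : ℕ → ℝ) (hcn : c n = 1) (m i l : ℕ) (hm : m < n) (hi : i < n)
    (hl : l < n) : rowF n c (m + 1) i l =
      rowF n c m i 0 * (- c (n - 1 - l)) + if l + 1 < n then rowF n c m i (l + 1) else 0 := by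
  have e : n + i - (l + (m + 1)) = n + i - (l + 1 + m) := by congr 1; omega
  rcases lt_trichotomy m i with h | h | h
  · have h0 : rowF n c m i 0 = 0 := by
      unfold rowF
      rw [if_pos h.le, if_neg (by omega)]
    rw [h0]
    unfold rowF
    rw [if_pos (by omega), if_pos h.le, e]
    split_ifs <;> first | omega | simp
  · subst h
    have h0 : rowF n c m m 0 = 1 := by
      unfold rowF
      rw [if_pos le_rfl, if_pos (by omega)]
      rw [show n + m - (0 + m) = n by omega, hcn]
    rw [h0]
    unfold rowF
    rw [if_neg (by omega), if_pos le_rfl, e, show n + m - (l + 1 + m) = n - 1 - l by omega]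
    split_ifs <;> first | omega | simp
  · have h0 : rowF n c m i 0 = 0 := by
      unfold rowF
      rw [if_neg (by omega), if_neg (by omega)]
    rw [h0]
    unfold rowF
    rw [if_neg (show ¬ m + 1 ≤ i by omega), if_neg (show ¬ m ≤ i by omega), e]
    split_ifs <;> first | omega | simp

/-- For a monic real polynomial `p` of degree `n` with (anti-)palindromic
coefficients `c (n-j) = (-1)^(k-1) c j`, the HOR-matrix `S` (upper triangular,
`S i j = c (n - (j - i))` above the diagonal) and the companion matrix `R` of
`p` satisfy `(-1)^k • (S⁻¹ Sᵀ) = Rⁿ`. -/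
theorem stmt5 (n : ℕ) (hn : 1 ≤ n) (k : ℕ) (hk : k = 1 ∨ k = 2)
    (c : ℕ → ℝ) (hcn : c n = 1)
    (hsym : ∀ j ≤ n, c (n - j) = (-1 : ℝ)^(k - 1) * c j)
    (S R : Matrix (Fin n) (Fin n) ℝ)
    (hS : ∀ i j : Fin n, S i j =
      if i = j then 1 else if i < j then c (n - ((j : ℕ) - (i : ℕ))) else 0)
    (hR : ∀ i l : Fin n, R i l =
      if (i : ℕ) = 0 then - c (n - 1 - (l : ℕ))
      else if (i : ℕ) = (l : ℕ) + 1 then 1 else 0) :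
    ((-1 : ℝ)^k) • (S⁻¹ * Sᵀ) = R ^ n := by
  have hmain : ∀ m ≤ n, ∀ i l : Fin n, (S * R ^ m) i l = rowF n c m i l := by
    intro m
    induction m with
    | zero =>
      intro _ i l
      have hi := i.2
      have hl := l.2
      rw [pow_zero, mul_one, hS]
      unfold rowF
      rw [if_pos (Nat.zero_le _)]
      simp only [Fin.ext_iff, Fin.lt_def]
      split_ifs with h1 h2 h3 h4
      · rw [show n + (i : ℕ) - (l + 0) = n by omega, hcn]
      · omega
      · congr 1; omega
      · omega
      · omega
      · rfl
    | succ m ih =>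
      intro hm i l
      rw [pow_succ, ← mul_assoc, Matrix.mul_apply, rowF_step n c hcn m i l (by omega) i.2 l.2]
      have : ∀ j : Fin n, (S * R ^ m) i j * R j l =
          (fun j : ℕ => (if j = 0 then rowF n c m i j * (- c (n - 1 - l)) else 0)
            + (if j = l + 1 then rowF n c m i j else 0)) j := by
        intro j
        rw [ih (by omega), hR]
        dsimp only
        split_ifs <;> first | omega | simp
      rw [Finset.sum_congr rfl (fun j _ => this j), ← Finset.sum_range (fun j : ℕ =>
        (if j = 0 then rowF n c m i j * (- c (n - 1 - l)) else 0)
            + (if j = l + 1 then rowF n c m i j else 0)), Finset.sum_add_distrib,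
        Finset.sum_ite_eq', Finset.sum_ite_eq']
      simp only [Finset.mem_range]
      rw [if_pos (by omega)]
  have hdet : S.det = 1 := by
    rw [Matrix.det_of_upperTriangular]
    · simp [hS]
    · intro i j hij
      have hij' : j < i := hij
      rw [hS, if_neg hij'.ne', if_neg (not_lt.mpr hij'.le)]
  have hfin : S * R ^ n = ((-1 : ℝ)^k) • Sᵀ := by
    ext i l
    have hi := i.2
    have hl := l.2
    have hs : ((-1 : ℝ))^k = - (-1 : ℝ)^(k-1) := by rcases hk with rfl | rfl <;> norm_num
    have hs2 : ((-1 : ℝ))^(k-1) * (-1 : ℝ)^(k-1) = 1 := by rcases hk with rfl | rfl <;> norm_num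
    rw [hmain n le_rfl, Matrix.smul_apply, Matrix.transpose_apply, hS, smul_eq_mul, hs]
    unfold rowF
    rw [if_neg (by omega)]
    simp only [Fin.ext_iff, Fin.lt_def]
    by_cases h : (l : ℕ) ≤ i
    · rw [if_pos (by omega), show n + (i : ℕ) - (l + n) = i - l by omega]
      have key := hsym (i - l) (by omega)
      have : (if (l : ℕ) = i then (1 : ℝ) else if (l : ℕ) < i then c (n - (i - l)) else 0)
          = c (n - (i - l)) := by
        split_ifs with h1 h2
        · rw [h1]; simp [hcn]
        · rfl
        · omega
      rw [this, key, neg_mul, ← mul_assoc, hs2, one_mul]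
    · rw [if_neg (by omega), if_neg (by omega), if_neg (by omega), mul_zero]
  rw [← Matrix.mul_smul, ← hfin, ← mul_assoc, Matrix.nonsing_inv_mul _ (by simp [hdet]), one_mul]
end

section
/- Let n ≥ 1, k ∈ {1,2}, and let p(x) = xⁿ + p_{n−1}x^{n−1} + ⋯ + p_0 ∈ ℝ[x] be monic with p_{n−j} = (−1)^{k−1}·p_j for all 0 ≤ j ≤ n (p_n := 1). Let S be the upper triangular n×n matrix with S_{ii} = 1 and S_{ij} = p_{n−(j−i)} for i < j, and R the companion matrix of p. Then Rᵀ·Sᵀ·R = Sᵀ, i.e. R preserves the Seifert form L(a,b) = aᵀSᵀb on ℝⁿ; equivalently S·R = R⁻ᵀ·S. -/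
open Matrix

/-- For a monic real polynomial `p` of degree `n` with (anti-)palindromic
coefficients, the companion matrix `R` of `p` preserves the Seifert form
`L(a,b) = aᵀ Sᵀ b` of the HOR-matrix `S`: `Rᵀ Sᵀ R = Sᵀ`, equivalently
`S R = R⁻ᵀ S`. -/
theorem stmt6 (n : ℕ) (hn : 1 ≤ n) (k : ℕ) (hk : k = 1 ∨ k = 2)
    (c : ℕ → ℝ) (hcn : c n = 1)
    (hsym : ∀ j ≤ n, c (n - j) = (-1 : ℝ)^(k - 1) * c j)
    (S R : Matrix (Fin n) (Fin n) ℝ)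
    (hS : ∀ i j : Fin n, S i j =
      if i = j then 1 else if i < j then c (n - ((j : ℕ) - (i : ℕ))) else 0)
    (hR : ∀ i l : Fin n, R i l =
      if (i : ℕ) = 0 then - c (n - 1 - (l : ℕ))
      else if (i : ℕ) = (l : ℕ) + 1 then 1 else 0) :
    Rᵀ * Sᵀ * R = Sᵀ ∧
    (∀ a b : Fin n → ℝ,
      (R.mulVec a) ⬝ᵥ (Sᵀ.mulVec (R.mulVec b)) = a ⬝ᵥ (Sᵀ.mulVec b)) ∧
    S * R = (R⁻¹)ᵀ * S := by
  obtain ⟨m, rfl⟩ : ∃ m, n = m + 1 := ⟨n - 1, by omega⟩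
  have hR0 : ∀ l, R 0 l = - c (m - (l : ℕ)) := by intro l; rw [hR]; simp
  have hRs : ∀ (i l : Fin m), R i.succ l.castSucc = if i = l then 1 else 0 := by
    intro i l; rw [hR]; simp [Fin.ext_iff]
  have hRl : ∀ (i : Fin m), R i.succ (Fin.last m) = 0 := by
    intro i; rw [hR]; have := i.isLt; simp; omega
  have hS00 : S 0 0 = 1 := by rw [hS]; simp
  have hSs0 : ∀ i : Fin m, S i.succ 0 = 0 := by intro i; rw [hS]; simp
  have hS0s : ∀ l : Fin m, S 0 l.succ = c (m - (l : ℕ)) := by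
    intro l; rw [hS]; simp [Fin.ext_iff]
  have hSss : ∀ i l : Fin m, S i.succ l.succ = S i.castSucc l.castSucc := by
    intro i l; rw [hS, hS]; simp
  have hScl : ∀ a : Fin m, S a.castSucc (Fin.last m) = c ((a : ℕ) + 1) := by
    intro a; rw [hS]
    have h := a.isLt
    have h1 : a.castSucc ≠ Fin.last m := a.castSucc_lt_last.ne
    rw [if_neg h1, if_pos a.castSucc_lt_last]
    congr 1
    simp only [Fin.val_last, Fin.val_castSucc]
    omega
  have hSll : S (Fin.last m) (Fin.last m) = 1 := by rw [hS]; simp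
  have hSlc : ∀ l : Fin m, S (Fin.last m) l.castSucc = 0 := by
    intro l; rw [hS]
    have h1 : Fin.last m ≠ l.castSucc := l.castSucc_lt_last.ne'
    rw [if_neg h1, if_neg l.castSucc_lt_last.not_gt]
  have hSRc : ∀ i (l : Fin m), (S * R) i l.castSucc = - S i 0 * c (m - (l : ℕ)) + S i l.succ := by
    intro i l
    rw [Matrix.mul_apply, Fin.sum_univ_succ]
    simp [hR0, hRs]
  have hSRl : ∀ i, (S * R) i (Fin.last m) = - S i 0 * c 0 := by
    intro i
    rw [Matrix.mul_apply, Fin.sum_univ_succ]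
    simp [hR0, hRl]
  have hTc : ∀ (M : Matrix (Fin (m+1)) (Fin (m+1)) ℝ) (a : Fin m) l,
      (Rᵀ * M) a.castSucc l = - c (m - (a : ℕ)) * M 0 l + M a.succ l := by
    intro M a l
    rw [Matrix.mul_apply, Fin.sum_univ_succ]
    simp [hR0, hRs]
  have hTl : ∀ (M : Matrix (Fin (m+1)) (Fin (m+1)) ℝ) l,
      (Rᵀ * M) (Fin.last m) l = - c 0 * M 0 l := by
    intro M l
    rw [Matrix.mul_apply, Fin.sum_univ_succ]
    simp [hR0, hRl]
  have he : c 0 = (-1 : ℝ)^(k-1) := by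
    have := hsym (m+1) le_rfl
    simpa [hcn] using this
  have he2 : c 0 * c 0 = 1 := by
    rw [he]; rcases hk with rfl | rfl <;> norm_num
  have key : Rᵀ * (S * R) = S := by
    ext a l
    induction a using Fin.lastCases with
    | last =>
      rw [hTl]
      induction l using Fin.lastCases with
      | last => rw [hSRl, hS00, hSll]; linarith
      | cast l => rw [hSRc, hS00, hS0s, hSlc]; ring
    | cast a =>
      rw [hTc]
      induction l using Fin.lastCases with
      | last =>
        rw [hSRl, hSRl, hS00, hSs0, hScl]
        have h := hsym (a + 1) (by have := a.isLt; omega)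
        rw [← he, show m + 1 - ((a : ℕ) + 1) = m - a by omega] at h
        rw [h]; linear_combination c (a + 1) * he2
      | cast l => rw [hSRc, hSRc, hS00, hS0s, hSs0, hSss]; ring
  have key2 : Rᵀ * Sᵀ * R = Sᵀ := by
    have := congrArg Matrix.transpose key
    simpa [Matrix.transpose_mul] using this
  refine ⟨key2, ?_, ?_⟩
  · intro a b
    conv_rhs => rw [← key2]
    rw [← Matrix.mulVec_mulVec, ← Matrix.mulVec_mulVec, Matrix.dotProduct_mulVec a,
      Matrix.vecMul_transpose]
  · have hdS : S.det = 1 := by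
      rw [Matrix.det_of_upperTriangular]
      · apply Finset.prod_eq_one; intro i _; rw [hS]; simp
      · intro i j hij
        have hij' : j < i := hij
        rw [hS, if_neg hij'.ne', if_neg hij'.not_gt]
    have hdR : IsUnit R.det := by
      have := congrArg Matrix.det key
      rw [Matrix.det_mul, Matrix.det_mul, hdS, Matrix.det_transpose] at this
      exact IsUnit.of_mul_eq_one (R.det) (by simpa using this)
    have h1 : (R⁻¹)ᵀ * Rᵀ = 1 := by
      rw [← Matrix.transpose_mul, Matrix.mul_nonsing_inv _ hdR, Matrix.transpose_one]
    conv_rhs => rw [← key]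
    rw [← Matrix.mul_assoc, h1, Matrix.one_mul]
end

section
/- Let p ∈ ℝ[x] be monic of degree n ≥ 1 with coefficients satisfying p_j = ε·p_{n−j} for all 0 ≤ j ≤ n, where ε ∈ {1,−1} and p_n := 1 (equivalently, xⁿ·p(1/x) = ε·p(x)). Then the multiplicity of 1 as a root of p is even if ε = 1 and odd if ε = −1. -/
open Polynomial in
/-- Reversal of a power of `X - 1`. -/
theorem reverse_pow_aux (m : ℕ) (q : Polynomial ℝ) :
    ((X - C 1) ^ m * q).reverse = (-1) ^ m * ((X - C 1) ^ m * q.reverse) := by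
  have h1 : (X - C (1:ℝ)).reverse = -(X - C 1) := by
    rw [Polynomial.reverse, natDegree_X_sub_C, reflect_sub, reflect_C, reflect_one_X]
    simp
  induction m with
  | zero => simp
  | succ k ih =>
    rw [pow_succ', mul_assoc, reverse_mul_of_domain, ih, h1]
    ring

open Polynomial in
theorem eval_one_reverse_aux (q : Polynomial ℝ) : q.reverse.eval 1 = q.eval 1 := by
  letI : Invertible (1:ℝ) := invertibleOne
  have := eval₂_reverse_mul_pow (RingHom.id ℝ) 1 q
  simpa [eval₂_id] using this

/-- For a monic real polynomial `p` of degree `n ≥ 1` with `p_j = ε p_{n-j}`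
(`ε = ±1`), the multiplicity of `1` as a root of `p` is even if `ε = 1` and odd
if `ε = -1`. -/
theorem stmt9 (n : ℕ) (hn : 1 ≤ n) (p : Polynomial ℝ) (hmonic : p.Monic)
    (hdeg : p.natDegree = n) (ε : ℝ) (hε : ε = 1 ∨ ε = -1)
    (hsym : ∀ j ≤ n, p.coeff j = ε * p.coeff (n - j)) :
    (ε = 1 → Even (p.rootMultiplicity 1)) ∧
    (ε = -1 → Odd (p.rootMultiplicity 1)) := by
  have hrev : p = Polynomial.C ε * p.reverse := by
    ext j
    rw [Polynomial.coeff_C_mul, Polynomial.coeff_reverse, hdeg]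
    rcases le_or_gt j n with h | h
    · rw [Polynomial.revAt_le h]; exact hsym j h
    · rw [Polynomial.revAt_eq_self_of_lt h,
        Polynomial.coeff_eq_zero_of_natDegree_lt (by omega), mul_zero]
  obtain ⟨q, hq, hnd⟩ := Polynomial.exists_eq_pow_rootMultiplicity_mul_and_not_dvd p
    hmonic.ne_zero 1
  generalize p.rootMultiplicity 1 = m at *
  have hq1 : q.eval 1 ≠ 0 := fun h => hnd (Polynomial.dvd_iff_isRoot.mpr h)
  rw [hq, reverse_pow_aux] at hrev
  have h2 : q = Polynomial.C ε * ((-1) ^ m * q.reverse) := by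
    apply mul_left_cancel₀ (pow_ne_zero m (Polynomial.X_sub_C_ne_zero (1:ℝ)))
    rw [hrev]
    ring
  have h3 := congrArg (Polynomial.eval 1) h2
  simp only [Polynomial.eval_mul, Polynomial.eval_C, Polynomial.eval_pow, Polynomial.eval_neg,
    Polynomial.eval_one, eval_one_reverse_aux] at h3
  have h4 : ε * (-1) ^ m = 1 := by
    apply mul_right_cancel₀ hq1
    linarith
  constructor
  · rintro rfl
    by_contra h
    rw [Nat.not_even_iff_odd] at h
    rw [h.neg_one_pow] at h4
    norm_num at h4
  · rintro rfl
    by_contra h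
    rw [Nat.not_odd_iff_even] at h
    rw [h.neg_one_pow] at h4
    norm_num at h4
end

section
/- Let m ≥ 0 be an integer, a₀ ≥ 2 and a₁,…,a_m ≥ 1 integers, and let f = x₀^{a₀} + Σ_{j=1}^m x_{j−1}·x_j^{a_j} ∈ ℂ[x₀,…,x_m] be the chain type singularity polynomial. Then: (i) the only point x ∈ ℂ^{m+1} at which all partial derivatives ∂f/∂x₀, …, ∂f/∂x_m vanish is x = 0; (ii) defining r_{−1} := 1, r_k := a₀·a₁·⋯·a_k, μ_{−1} := 1, μ_k := r_k − μ_{k−1} for 0 ≤ k ≤ m, and rational weights w_k := μ_{k−1}/r_k, one has w₀ = 1/a₀, w_{k−1} + a_k·w_k = 1 for 1 ≤ k ≤ m (so every monomial of f has weighted degree 1 with respect to the weights w₀,…,w_m), and ∏_{k=0}^m (1/w_k − 1) = μ_m. -/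
open MvPolynomial

/-- `r_k = a₀ a₁ ⋯ a_k` for `k ≥ 0`. -/
def rr (a : ℕ → ℕ) (k : ℕ) : ℕ := ∏ i ∈ Finset.range (k + 1), a i

/-- `μ_k = r_k - μ_{k-1}` with `μ_{-1} = 1` (so `μ_0 = a₀ - 1`). -/
def mu (a : ℕ → ℕ) : ℕ → ℤ
  | 0 => (a 0 : ℤ) - 1
  | k + 1 => (rr a (k + 1) : ℤ) - mu a k

/-- The weights `w_k = μ_{k-1} / r_k` (so `w_0 = 1/a₀`). -/
def ww (a : ℕ → ℕ) : ℕ → ℚ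
  | 0 => 1 / (a 0 : ℚ)
  | k + 1 => (mu a k : ℚ) / (rr a (k + 1) : ℚ)

theorem chain_rr_succ (a : ℕ → ℕ) (k : ℕ) : rr a (k + 1) = rr a k * a (k + 1) := by
  simp only [rr]
  rw [Finset.prod_range_succ]

theorem chain_mu_bounds (m : ℕ) (a : ℕ → ℕ) (ha0 : 2 ≤ a 0)
    (ha : ∀ j, 1 ≤ j → j ≤ m → 1 ≤ a j) (k : ℕ) (hk : k ≤ m) :
    0 < mu a k ∧ mu a k < (rr a k : ℤ) := by
  induction k with
  | zero => simp [mu, rr]; omega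
  | succ k ih =>
    obtain ⟨h1, h2⟩ := ih (by omega)
    have h3 := ha (k + 1) (by omega) hk
    have h4 : rr a k ≤ rr a (k + 1) := by
      rw [chain_rr_succ]; exact Nat.le_mul_of_pos_right _ h3
    have h5 : (rr a k : ℤ) ≤ rr a (k + 1) := by exact_mod_cast h4
    simp only [mu]
    constructor <;> linarith

/-- The values of the partial derivatives, in terms of the extension by zero of `x`. -/
theorem chain_pderiv (m : ℕ) (a : ℕ → ℕ) (x : Fin (m + 1) → ℂ) (y : ℕ → ℂ)
    (hy : ∀ i : Fin (m + 1), x i = y i) (i : Fin (m + 1)) :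
    eval x (pderiv i (X 0 ^ a 0 + ∑ j : Fin m, X j.castSucc * X j.succ ^ a ((j : ℕ) + 1))) =
      (if (i : ℕ) = 0 then (a 0 : ℂ) * y 0 ^ (a 0 - 1) else 0) +
      ((∑ j ∈ Finset.range m, if j + 1 = (i : ℕ) then
          (a (j + 1) : ℂ) * y j * y (j + 1) ^ (a (j + 1) - 1) else 0) +
        ∑ j ∈ Finset.range m, if j = (i : ℕ) then y (j + 1) ^ a (j + 1) else 0) := by
  rw [Finset.sum_range, Finset.sum_range, ← Finset.sum_add_distrib]
  simp only [map_add, map_sum]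
  congr 1
  · rw [Derivation.leibniz_pow, pderiv_X]
    by_cases h : i = 0
    · subst h; simp [hy]
    · have h' : (i : ℕ) ≠ 0 := fun h1 => h (Fin.ext h1)
      simp [h', Pi.single_apply, Ne.symm h]
  · refine Finset.sum_congr rfl fun j _ => ?_
    have e1 : (j.succ = i) ↔ ((j : ℕ) + 1 = i) := by simp [Fin.ext_iff]
    have e2 : (j.castSucc = i) ↔ ((j : ℕ) = i) := by simp [Fin.ext_iff]
    rw [Derivation.leibniz, Derivation.leibniz_pow, pderiv_X, pderiv_X]
    simp only [Pi.single_apply, e1, e2]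
    split_ifs <;> simp [hy] <;> ring

theorem chain_crit (m : ℕ) (a : ℕ → ℕ) (ha0 : 2 ≤ a 0)
    (ha : ∀ j, 1 ≤ j → j ≤ m → 1 ≤ a j) (y : ℕ → ℂ)
    (h : ∀ i, i ≤ m → (if i = 0 then (a 0 : ℂ) * y 0 ^ (a 0 - 1) else 0) +
      ((∑ j ∈ Finset.range m, if j + 1 = i then
          (a (j + 1) : ℂ) * y j * y (j + 1) ^ (a (j + 1) - 1) else 0) +
        ∑ j ∈ Finset.range m, if j = i then y (j + 1) ^ a (j + 1) else 0) = 0) :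
    ∀ i, i ≤ m → y i = 0 := by
  have hz : (a 0 : ℂ) * y 0 ^ (a 0 - 1) + (if 0 < m then y 1 ^ a 1 else 0) = 0 := by
    have := h 0 (by omega)
    simpa using this
  have hs : ∀ k, k + 1 ≤ m → (a (k + 1) : ℂ) * y k * y (k + 1) ^ (a (k + 1) - 1) +
      (if k + 1 < m then y (k + 2) ^ a (k + 2) else 0) = 0 := by
    intro k hk
    have := h (k + 1) hk
    simp only [Nat.add_right_cancel_iff, Finset.sum_ite_eq', Finset.mem_range] at this
    simpa [show k < m by omega] using this
  have hap : ∀ j, j ≤ m → a j ≠ 0 := by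
    intro j hj
    rcases Nat.eq_zero_or_pos j with rfl | h0
    · omega
    · have := ha j h0 hj; omega
  by_cases h0 : y 0 = 0
  · have key : ∀ i, (i ≤ m → y i = 0) ∧ (i + 1 ≤ m → y (i + 1) = 0) := by
      intro i
      induction i with
      | zero =>
        refine ⟨fun _ => h0, fun hm => ?_⟩
        rw [h0, zero_pow (by omega), if_pos (by omega)] at hz
        simp only [mul_zero, zero_add] at hz
        exact eq_zero_of_pow_eq_zero hz
      | succ i ih =>
        refine ⟨ih.2, fun hm => ?_⟩
        have := hs i (by omega)
        rw [ih.1 (by omega), if_pos (by omega)] at this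
        simp only [mul_zero, zero_mul, zero_add] at this
        exact eq_zero_of_pow_eq_zero this
    exact fun i => (key i).1
  · exfalso
    have key : ∀ i, (i ≤ m → y i ≠ 0) ∧ (i + 1 ≤ m → y (i + 1) ≠ 0) := by
      intro i
      induction i with
      | zero =>
        refine ⟨fun _ => h0, fun hm h1 => ?_⟩
        simp only [zero_add] at h1
        rw [h1, if_pos (by omega), zero_pow (hap 1 (by omega)), add_zero] at hz
        exact mul_ne_zero (Nat.cast_ne_zero.2 (hap 0 (by omega))) (pow_ne_zero _ h0) hz
      | succ i ih =>
        refine ⟨ih.2, fun hm h1 => ?_⟩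
        have := hs i (by omega)
        rw [if_pos (by omega), show i + 2 = i + 1 + 1 from rfl, h1,
          zero_pow (hap _ (by omega)), add_zero] at this
        exact mul_ne_zero (mul_ne_zero (Nat.cast_ne_zero.2 (hap _ (by omega)))
          (ih.1 (by omega))) (pow_ne_zero _ (ih.2 (by omega))) this
    rcases m with _ | m
    · simp only [lt_irrefl, if_false, add_zero] at hz
      exact mul_ne_zero (Nat.cast_ne_zero.2 (hap 0 (by omega))) (pow_ne_zero _ h0) hz
    · have := hs m le_rfl
      rw [if_neg (by omega), add_zero] at this
      exact mul_ne_zero (mul_ne_zero (Nat.cast_ne_zero.2 (hap _ (by omega)))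
          ((key m).1 (by omega))) (pow_ne_zero _ ((key m).2 (by omega))) this

theorem chain_prod (m : ℕ) (a : ℕ → ℕ) (ha0 : 2 ≤ a 0)
    (ha : ∀ j, 1 ≤ j → j ≤ m → 1 ≤ a j) (n : ℕ) (hn : n ≤ m) :
    (∏ k ∈ Finset.range (n + 1), (1 / ww a k - 1)) = (mu a n : ℚ) := by
  induction n with
  | zero => simp [ww, mu]
  | succ n ih =>
    rw [Finset.prod_range_succ, ih (by omega)]
    have h1 : (mu a n : ℚ) ≠ 0 := by
      exact_mod_cast (chain_mu_bounds m a ha0 ha n (by omega)).1.ne'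
    simp only [ww, mu]
    push_cast
    rw [one_div_div]
    field_simp

/-- For the chain type singularity `f = x₀^{a₀} + Σ_{j=1}^m x_{j-1} x_j^{a_j}`:
(i) the only common zero of all partial derivatives is `0`;
(ii) the weights satisfy `w₀ = 1/a₀`, `w_{k-1} + a_k w_k = 1`, and
`∏_{k=0}^m (1/w_k - 1) = μ_m` (the Milnor number). -/
theorem stmt17 (m : ℕ) (a : ℕ → ℕ) (ha0 : 2 ≤ a 0)
    (ha : ∀ j, 1 ≤ j → j ≤ m → 1 ≤ a j)
    (f : MvPolynomial (Fin (m + 1)) ℂ)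
    (hf : f = X 0 ^ a 0 + ∑ j : Fin m, X j.castSucc * X j.succ ^ a ((j : ℕ) + 1)) :
    (∀ x : Fin (m + 1) → ℂ,
      (∀ i : Fin (m + 1), eval x (pderiv i f) = 0) → x = 0) ∧
    ww a 0 = 1 / (a 0 : ℚ) ∧
    (∀ k, 1 ≤ k → k ≤ m → ww a (k - 1) + (a k : ℚ) * ww a k = 1) ∧
    (∏ k ∈ Finset.range (m + 1), (1 / ww a k - 1)) = (mu a m : ℚ) := by
  refine ⟨?_, rfl, ?_, chain_prod m a ha0 ha m le_rfl⟩
  · intro x hx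
    subst hf
    let y : ℕ → ℂ := fun n => if h : n < m + 1 then x ⟨n, h⟩ else 0
    have hy : ∀ i : Fin (m + 1), x i = y i := fun i => by simp only [y, dif_pos i.isLt]
    have hc := chain_crit m a ha0 ha y (fun i hi => by
      have := hx ⟨i, by omega⟩
      rwa [chain_pderiv m a x y hy] at this)
    funext i
    rw [hy, hc i (by omega)]
    rfl
  · intro k hk hkm
    obtain ⟨k, rfl⟩ : ∃ n, k = n + 1 := ⟨k - 1, by omega⟩
    have hr : ((rr a k : ℕ) : ℚ) ≠ 0 := by
      have := chain_mu_bounds m a ha0 ha k (by omega)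
      have h2 : (0 : ℤ) < rr a k := this.1.trans this.2
      exact_mod_cast h2.ne'
    have hak : (a (k + 1) : ℚ) ≠ 0 := by
      have := ha (k + 1) hk hkm
      exact_mod_cast (by omega : a (k + 1) ≠ 0)
    rcases k with _ | k
    · simp only [ww, mu, chain_rr_succ, zero_add, Nat.sub_self] at *
      have h0 : (a 0 : ℚ) ≠ 0 := by exact_mod_cast (by omega : a 0 ≠ 0)
      simp [rr, Finset.prod_range_succ]
      field_simp
      ring
    · rw [Nat.add_sub_cancel]
      simp only [ww]
      rw [chain_rr_succ a (k + 1), show mu a (k + 1) = (rr a (k + 1) : ℤ) - mu a k from rfl]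
      push_cast
      field_simp
      ring
end
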